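/- Let k ≥ 2 be an integer. Then |S_{2^k}| = 2^{k−1} + 1 and |N_{2^k}| = 2^{k−1} − 1. -/

import Mathlib

/-- `S_n`: the set of elements of `ℤ/nℤ` expressible as a sum of two squares. -/
def sumTwoSquares (n : ℕ) : Set (ZMod n) := {m | ∃ x y : ZMod n, m = x ^ 2 + y ^ 2}

/-- `N_n`: the set of elements of `ℤ/nℤ` not expressible as a sum of two squares. -/
def notSumTwoSquares (n : ℕ) : Set (ZMod n) := (sumTwoSquares n)ᶜ

/-- Sums of two squares modulo `2 ^ k`, on natural-number representatives. -/
def RepTwo (k m : ℕ) : Prop := ∃ x y : ℤ, (2 : ℤ) ^ k ∣ x ^ 2 + y ^ 2 - m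

lemma repTwo_even (k m : ℕ) : RepTwo (k + 1) (2 * m) ↔ RepTwo k m := by
  constructor
  · rintro ⟨x, y, c, hc⟩
    have hpar : Even (x + y) := by
      have h1 : Even (x ^ 2 + y ^ 2) := by
        refine ⟨2 ^ k * c + m, ?_⟩
        push_cast at hc
        rw [pow_succ 2 k] at hc
        linarith
      simpa [Int.even_add, Int.even_pow] using h1
    obtain ⟨a, ha⟩ := hpar
    refine ⟨a, x - a, c, ?_⟩
    have hy : y = 2 * a - x := by linarith
    subst hy
    push_cast at hc
    rw [pow_succ 2 k] at hc
    linarith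
  · rintro ⟨x, y, c, hc⟩
    refine ⟨x + y, x - y, c, ?_⟩
    push_cast
    rw [pow_succ 2 k]
    linarith

lemma sq_of_one_mod_eight (k : ℕ) (m : ℤ) : ∃ x : ℤ, (2 : ℤ) ^ (k + 3) ∣ x ^ 2 - (8 * m + 1) := by
  induction k with
  | zero => exact ⟨1, -m, by ring⟩
  | succ k ih =>
    obtain ⟨x, c, hc⟩ := ih
    have hodd : Odd x := by
      have h1 : Odd (x ^ 2) := ⟨2 ^ (k + 2) * c + 4 * m, by
        rw [pow_succ 2 (k + 2)] at hc; linarith⟩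
      simpa [Int.odd_pow] using h1
    rcases Int.even_or_odd c with ⟨d, hd⟩ | ⟨d, hd⟩
    · refine ⟨x, d, ?_⟩
      rw [hc, hd]; ring
    · obtain ⟨e, he⟩ := hodd
      refine ⟨x + 2 ^ (k + 2), d + e + 1 + 2 ^ k, ?_⟩
      have : (x + 2 ^ (k + 2)) ^ 2 - (8 * m + 1)
          = 2 ^ (k + 3) * c + 2 ^ (k + 3) * x + 2 ^ (k + 2) * 2 ^ (k + 2) := by
        rw [← hc]; ring
      rw [this, hd, he]; ring

lemma repTwo_odd (k m : ℕ) (hk : 1 ≤ k) : RepTwo (k + 1) (2 * m + 1) ↔ Even m := by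
  constructor
  · rintro ⟨x, y, h⟩
    have h4 : (4 : ℤ) ∣ x ^ 2 + y ^ 2 - ((2 * m + 1 : ℕ) : ℤ) :=
      dvd_trans (pow_dvd_pow (2 : ℤ) (by omega : 2 ≤ k + 1)) h
    by_contra hm
    rw [Nat.not_even_iff_odd] at hm
    obtain ⟨j, hj⟩ := hm
    subst hj
    obtain ⟨c, hc⟩ := h4
    push_cast at hc
    rcases Int.even_or_odd' x with ⟨a, ha | ha⟩ <;> rcases Int.even_or_odd' y with ⟨b, hb | hb⟩ <;>
      subst ha <;> subst hb <;> ring_nf at hc <;> omega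
  · rintro ⟨j, hj⟩
    subst hj
    have key : ∀ z : ℤ, ∀ t : ℤ, (4 * j + 1 : ℤ) = 8 * t + 1 + z ^ 2 →
        RepTwo (k + 1) (2 * (j + j) + 1) := by
      intro z t h
      obtain ⟨x, hx⟩ := sq_of_one_mod_eight k t
      refine ⟨x, z, (pow_dvd_pow (2 : ℤ) (by omega : k + 1 ≤ k + 3)).trans ?_⟩
      have e : x ^ 2 + z ^ 2 - ((2 * (j + j) + 1 : ℕ) : ℤ) = x ^ 2 - (8 * t + 1) := by
        push_cast
        linarith
      rw [e]
      exact hx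
    rcases Nat.even_or_odd' j with ⟨t, rfl | rfl⟩
    · exact key 0 t (by push_cast; ring)
    · exact key 2 t (by push_cast; ring)

lemma count_two_mul (p : ℕ → Prop) [DecidablePred p] (n : ℕ) :
    Nat.count p (2 * n) = Nat.count (fun m => p (2 * m)) n
      + Nat.count (fun m => p (2 * m + 1)) n := by
  induction n with
  | zero => simp
  | succ n ih =>
    rw [show 2 * (n + 1) = 2 * n + 1 + 1 by ring]
    simp only [Nat.count_succ, ih]
    omega

lemma count_even (n : ℕ) : Nat.count (fun m => Even m) (2 * n) = n := by
  rw [count_two_mul]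
  simp

open Classical in
lemma count_repTwo (k : ℕ) : Nat.count (RepTwo (k + 1)) (2 ^ (k + 1)) = 2 ^ k + 1 := by
  induction k with
  | zero =>
    have h0 : RepTwo 1 0 := ⟨0, 0, by norm_num⟩
    have h1 : RepTwo 1 1 := ⟨1, 0, by norm_num⟩
    simp [Nat.count_succ, h0, h1]
  | succ k ih =>
    rw [pow_succ' 2 (k + 1), count_two_mul]
    simp only [repTwo_even, repTwo_odd (k + 1) _ (by omega)]
    have : Nat.count (fun m => Even m) (2 ^ (k + 1)) = 2 ^ k := by
      rw [pow_succ']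
      convert count_even (2 ^ k)
    have h2 : Nat.count (fun m => RepTwo (k + 1) m) (2 ^ (k + 1)) = 2 ^ k + 1 := ih
    rw [this, h2, pow_succ]
    ring

lemma mem_sumTwoSquares_iff (k m : ℕ) :
    (m : ZMod (2 ^ k)) ∈ sumTwoSquares (2 ^ k) ↔ RepTwo k m := by
  have key : ∀ x y : ℤ, (m : ZMod (2 ^ k)) = (x : ZMod (2 ^ k)) ^ 2 + (y : ZMod (2 ^ k)) ^ 2 ↔
      (2 : ℤ) ^ k ∣ x ^ 2 + y ^ 2 - m := by
    intro x y
    have := ZMod.intCast_eq_intCast_iff_dvd_sub (m : ℤ) (x ^ 2 + y ^ 2) (2 ^ k)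
    push_cast at this
    exact this
  constructor
  · rintro ⟨x, y, h⟩
    obtain ⟨a, rfl⟩ := ZMod.intCast_surjective x
    obtain ⟨b, rfl⟩ := ZMod.intCast_surjective y
    exact ⟨a, b, (key a b).1 h⟩
  · rintro ⟨x, y, h⟩
    exact ⟨x, y, (key x y).2 h⟩

open Classical in
lemma ncard_sumTwoSquares (k : ℕ) :
    (sumTwoSquares (2 ^ k)).ncard = Nat.count (RepTwo k) (2 ^ k) := by
  have himg : sumTwoSquares (2 ^ k) = (fun m : ℕ => (m : ZMod (2 ^ k))) ''
      (((Finset.range (2 ^ k)).filter (RepTwo k) : Finset ℕ) : Set ℕ) := by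
    ext z
    constructor
    · intro hz
      have hv : ((z.val : ℕ) : ZMod (2 ^ k)) = z := ZMod.natCast_zmod_val z
      refine ⟨z.val, ?_, hv⟩
      have hr : RepTwo k z.val := by
        rw [← mem_sumTwoSquares_iff, hv]; exact hz
      simpa using ⟨ZMod.val_lt z, hr⟩
    · rintro ⟨m, hm, rfl⟩
      have hm2 : m < 2 ^ k ∧ RepTwo k m := by simpa using hm
      exact (mem_sumTwoSquares_iff k m).2 hm2.2
  rw [himg, Set.InjOn.ncard_image, Set.ncard_coe_finset, Nat.count_eq_card_filter_range]
  intro a ha b hb hab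
  have ha2 : a < 2 ^ k ∧ RepTwo k a := by simpa using ha
  have hb2 : b < 2 ^ k ∧ RepTwo k b := by simpa using hb
  have h := (ZMod.natCast_eq_natCast_iff' a b (2 ^ k)).1 hab
  rwa [Nat.mod_eq_of_lt ha2.1, Nat.mod_eq_of_lt hb2.1] at h

/-- For `k ≥ 2`, `|S_{2^k}| = 2^(k-1) + 1` and `|N_{2^k}| = 2^(k-1) - 1`. -/
theorem card_sumTwoSquares_two_pow (k : ℕ) (hk : 2 ≤ k) :
    Nat.card (sumTwoSquares (2 ^ k)) = 2 ^ (k - 1) + 1 ∧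
    Nat.card (notSumTwoSquares (2 ^ k)) = 2 ^ (k - 1) - 1 := by
  obtain ⟨j, rfl⟩ : ∃ j, k = j + 1 := ⟨k - 1, by omega⟩
  have h1 : (sumTwoSquares (2 ^ (j + 1))).ncard = 2 ^ j + 1 := by
    rw [ncard_sumTwoSquares, count_repTwo]
  have h2 := Set.ncard_add_ncard_compl (sumTwoSquares (2 ^ (j + 1)))
  rw [Nat.card_zmod, h1] at h2
  have h3 := pow_succ 2 j
  rw [Nat.card_coe_set_eq, Nat.card_coe_set_eq, Nat.add_sub_cancel]
  refine ⟨h1, ?_⟩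
  unfold notSumTwoSquares
  omega
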